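/- arXiv:2501.13498 — 4 statements merged into one kernel-verified Lean document; each statement's English description precedes it below -/
import Mathlib

section
/- Let N ≥ 1 and suppose (X_n)_{0≤n<N} satisfies the functional correlation bound with rate function R and constant C_*. Then for every K ≥ 2 the following holds: whenever I ⊂ ℤ₊ ∩ [0,N−1] is decomposed as I = I₁ ∪ ⋯ ∪ I_K into nonempty pairwise disjoint sets with max I_k < min I_{k+1} for each 1 ≤ k ≤ K−1, with gaps g_k = min I_{k+1} − max I_k, and F : [−L,L]^{|I|} → ℝ is separately Lipschitz, then |∫ F dν_I − ∫ F d(ν_{I₁} ⊗ ⋯ ⊗ ν_{I_K})| ≤ C_* ‖F‖_Lip ∑_{k=1}^{K−1} R(g_k). -/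
set_option autoImplicit false

open MeasureTheory Filter
open scoped ENNReal NNReal Topology

noncomputable section

/-- The cube `[-L,L]^n`. -/
def cube (L : ℝ) (n : ℕ) : Set (Fin n → ℝ) := {x | ∀ j, |x j| ≤ L}

/-- `F : [-L,L]^n → ℝ` is separately Lipschitz, with `Fb` a bound for `sup |F|` on the cube
and `Fl` a bound for the maximal Lipschitz constant `[F]₁` in any single coordinate
(so that `Fb + Fl` is a bound for `‖F‖_Lip = ‖F‖_∞ + [F]₁`). -/
structure SepLipBound (L : ℝ) {n : ℕ} (F : (Fin n → ℝ) → ℝ) (Fb Fl : ℝ) : Prop where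
  bound : ∀ x ∈ cube L n, |F x| ≤ Fb
  lip : ∀ (j : Fin n), ∀ x ∈ cube L n, ∀ a b : ℝ, |a| ≤ L → |b| ≤ L →
    |F (Function.update x j a) - F (Function.update x j b)| ≤ Fl * |a - b|

/-- The functional correlation bound (FCB) for `(X_n)_{0 ≤ n < N}` with rate function `R` and
constant `Cs`: for every finite ordered index set `i 0 < i 1 < ⋯ < i (n-1)` inside `[0, N)`,
split at position `p` into two blocks, and every separately Lipschitz
`F : [-L,L]^n → ℝ`, the correlation between the two blocks is at most
`Cs ‖F‖_Lip R(g₁)` where `g₁ = i p − i (p−1)` is the gap between the blocks. -/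
def FCB {M : Type*} [MeasurableSpace M] (μ : MeasureTheory.Measure M)
    (X : ℕ → M → ℝ) (N : ℕ) (L Cs : ℝ) (R : ℕ → ℝ) : Prop :=
  ∀ (n : ℕ) (i : ℕ → ℕ), StrictMono i → (∀ j < n, i j < N) →
  ∀ p : ℕ, 0 < p → p < n →
  ∀ (F : (Fin n → ℝ) → ℝ) (Fb Fl : ℝ), SepLipBound L F Fb Fl →
    |(∫ x, F (fun j => X (i j) x) ∂μ) -
      ∫ x, ∫ y, F (fun j => if (j : ℕ) < p then X (i j) x else X (i j) y) ∂μ ∂μ|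
    ≤ Cs * (Fb + Fl) * R (i p - i (p - 1))

/-!
Induct on the number of blocks, peeling off the last one. The correlation bound, applied to the
split between the last two blocks, makes the last block independent of the others at the cost of
one term `C_* ‖F‖_Lip R(g)`. Freezing the values of the last block turns `F` into a separately
Lipschitz function of the remaining coordinates with the same bounds, so the induction hypothesis
applies to each frozen function, uniformly in the frozen values.
-/

section Extend

variable {ι κ α : Type*} {σ : κ → ι}

lemma extend_update_of_injective [DecidableEq ι] [DecidableEq κ] (hσ : σ.Injective)
    (x : κ → α) (y : ι → α) (k : κ) (a : α) :
    Function.extend σ (Function.update x k a) y =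
      Function.update (Function.extend σ x y) (σ k) a := by
  funext j
  by_cases hj : ∃ l, σ l = j
  · obtain ⟨l, rfl⟩ := hj
    simp only [hσ.extend_apply, Function.update_apply, hσ.eq_iff]
  · rw [Function.extend_apply' _ _ _ hj, Function.update_of_ne fun h => hj ⟨k, h.symm⟩,
      Function.extend_apply' _ _ _ hj]

lemma measurable_extend {Ω : Type*} [MeasurableSpace Ω] [MeasurableSpace α]
    {U : Ω → κ → α} {V : Ω → ι → α} (hU : Measurable U) (hV : Measurable V) :
    Measurable fun ω => Function.extend σ (U ω) (V ω) := by
  refine measurable_pi_iff.2 fun j => ?_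
  unfold Function.extend
  split_ifs
  exacts [measurable_pi_iff.1 hU _, measurable_pi_iff.1 hV j]

end Extend

section Integral

variable {E : Type*} [NormedAddCommGroup E] [NormedSpace ℝ E]

lemma integral_pi_eq_integral_snoc {n : ℕ} {α : Type*} [MeasurableSpace α]
    (μ : Fin (n + 1) → Measure α) [∀ k, SigmaFinite (μ k)] {f : (Fin (n + 1) → α) → E}
    (hf : Integrable f (Measure.pi μ)) :
    ∫ w, f w ∂Measure.pi μ =
      ∫ y, ∫ z, f (Fin.snoc z y) ∂Measure.pi (fun k : Fin n => μ k.castSucc) ∂μ (Fin.last n) := by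
  have hmp := (measurePreserving_piFinSuccAbove μ (Fin.last n)).symm
  rw [← hmp.integral_comp']
  refine (integral_prod _ (hmp.integrable_comp_of_integrable hf)).trans ?_
  simp only [Function.comp_apply, MeasurableEquiv.piFinSuccAbove_symm_apply,
    Fin.insertNthEquiv_last, Fin.snocEquiv, Equiv.coe_fn_mk, Fin.succAbove_last]

lemma integral_pi_eq_integral_extend {ι κ M β : Type*} [MeasurableSpace M] {μ : Measure M}
    [SigmaFinite μ] {K : ℕ} {F : (ι → β) → E} {Y : ι → M → β} {σ : κ → ι}
    {blk : ι → Fin (K + 1)} {blk' : κ → Fin K} (hcast : ∀ l, blk (σ l) = (blk' l).castSucc)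
    (hlast : ∀ j, (¬ ∃ l, σ l = j) → blk j = Fin.last K)
    (hint : Integrable (fun w : Fin (K + 1) → M => F fun j => Y j (w (blk j)))
      (Measure.pi fun _ => μ)) :
    ∫ w : Fin (K + 1) → M, F (fun j => Y j (w (blk j))) ∂(Measure.pi fun _ => μ) =
      ∫ y, ∫ z : Fin K → M, F (Function.extend σ (fun l => Y (σ l) (z (blk' l)))
        fun j => Y j y) ∂(Measure.pi fun _ => μ) ∂μ := by
  rw [integral_pi_eq_integral_snoc (fun _ => μ) hint]
  congr! 5 with y z
  funext j
  unfold Function.extend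
  split_ifs with hj
  · beta_reduce
    rw [← Fin.snoc_castSucc (α := fun _ => M) y z, ← hcast, hj.choose_spec]
  · rw [hlast j hj, Fin.snoc_last]

lemma norm_integral_sub_integral_le {Ω : Type*} [MeasurableSpace Ω] {P : Measure Ω}
    [IsProbabilityMeasure P] {f g : Ω → E} {C : ℝ} (hf : Integrable f P) (hg : Integrable g P)
    (h : ∀ ω, ‖f ω - g ω‖ ≤ C) : ‖∫ ω, f ω ∂P - ∫ ω, g ω ∂P‖ ≤ C := by
  rw [← integral_sub hf hg]
  simpa using norm_integral_le_of_norm_le_const (μ := P) (Eventually.of_forall h)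

end Integral

lemma extend_mem_cube {L : ℝ} {m n : ℕ} {σ : Fin m → Fin n}
    {x : Fin m → ℝ} {y : Fin n → ℝ} (hx : x ∈ cube L m) (hy : y ∈ cube L n) :
    Function.extend σ x y ∈ cube L n := by
  intro j
  unfold Function.extend
  split_ifs
  exacts [hx _, hy _]

namespace SepLipBound

variable {L : ℝ} {n : ℕ} {F : (Fin n → ℝ) → ℝ} {Fb Fl : ℝ}

lemma abs_piecewise_sub_le (hF : SepLipBound L F Fb Fl) {x y : Fin n → ℝ}
    (hx : x ∈ cube L n) (hy : y ∈ cube L n) (s : Finset (Fin n)) :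
    |F (s.piecewise y x) - F x| ≤ ∑ j ∈ s, Fl * |y j - x j| := by
  induction s using Finset.induction_on with
  | empty => simp
  | insert j s hj ih =>
    have hmem : s.piecewise y x ∈ cube L n := fun k =>
      s.piecewise_cases y x (fun t => |t| ≤ L) (hy k) (hx k)
    have hupd : Function.update (s.piecewise y x) j (x j) = s.piecewise y x := by
      rw [Function.update_eq_iff]
      exact ⟨(s.piecewise_eq_of_notMem y x hj).symm, fun _ _ => rfl⟩
    have hstep := hF.lip j _ hmem (y j) (x j) (hy j) (hx j)
    rw [hupd] at hstep
    rw [Finset.sum_insert hj, Finset.piecewise_insert]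
    exact (abs_sub_le _ _ _).trans (add_le_add hstep ih)

lemma abs_sub_le (hF : SepLipBound L F Fb Fl) {x y : Fin n → ℝ}
    (hx : x ∈ cube L n) (hy : y ∈ cube L n) : |F y - F x| ≤ ∑ j, Fl * |y j - x j| := by
  simpa only [Finset.piecewise_univ] using hF.abs_piecewise_sub_le hx hy Finset.univ

lemma continuousOn (hF : SepLipBound L F Fb Fl) : ContinuousOn F (cube L n) := by
  intro x hx
  rw [ContinuousWithinAt, tendsto_iff_norm_sub_tendsto_zero]
  have hlim : Tendsto (fun y : Fin n → ℝ => ∑ j, Fl * |y j - x j|) (𝓝[cube L n] x) (𝓝 0) := by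
    have hcont : Continuous fun y : Fin n → ℝ => ∑ j, Fl * |y j - x j| := by fun_prop
    simpa using (hcont.tendsto x).mono_left nhdsWithin_le_nhds
  exact squeeze_zero' (Eventually.of_forall fun _ => norm_nonneg _)
    (eventually_mem_nhdsWithin.mono fun y hy => hF.abs_sub_le hx hy) hlim

lemma integrable_comp (hF : SepLipBound L F Fb Fl) {Ω : Type*} [MeasurableSpace Ω]
    {P : Measure Ω} [IsFiniteMeasure P] {Y : Ω → Fin n → ℝ} (hY : Measurable Y)
    (hmem : ∀ ω, Y ω ∈ cube L n) : Integrable (fun ω => F (Y ω)) P := by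
  have hmeas : Measurable fun ω => F (Y ω) :=
    hF.continuousOn.domRestrict.measurable.comp (hY.subtype_mk (h := hmem))
  exact .of_bound hmeas.aestronglyMeasurable Fb (.of_forall fun ω => hF.bound _ (hmem ω))

lemma integrable_pi (hF : SepLipBound L F Fb Fl) {M : Type*} [MeasurableSpace M]
    {μ : Measure M} [IsFiniteMeasure μ] {Y : Fin n → M → ℝ} (hY : ∀ j, Measurable (Y j))
    (hYL : ∀ j x, |Y j x| ≤ L) {κ : Type*} [Fintype κ] (blk : Fin n → κ) :
    Integrable (fun z : κ → M => F fun j => Y j (z (blk j))) (Measure.pi fun _ => μ) :=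
  hF.integrable_comp (by fun_prop) fun _ _ => hYL _ _

variable {m : ℕ} {σ : Fin m → Fin n}

lemma comp_extend (hF : SepLipBound L F Fb Fl) (hσ : σ.Injective) {y : Fin n → ℝ}
    (hy : y ∈ cube L n) : SepLipBound L (fun x => F (Function.extend σ x y)) Fb Fl where
  bound x hx := hF.bound _ (extend_mem_cube hx hy)
  lip k x hx a c ha hc := by
    simp only [extend_update_of_injective hσ]
    exact hF.lip _ _ (extend_mem_cube hx hy) a c ha hc

lemma integrable_extend_prod (hF : SepLipBound L F Fb Fl)
    {Ω Ω' : Type*} [MeasurableSpace Ω] [MeasurableSpace Ω'] {P : Measure Ω} {Q : Measure Ω'}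
    [IsFiniteMeasure P] [IsFiniteMeasure Q] {U : Ω → Fin m → ℝ} {V : Ω' → Fin n → ℝ}
    (hU : Measurable U) (hV : Measurable V)
    (hUmem : ∀ ω, U ω ∈ cube L m) (hVmem : ∀ ω, V ω ∈ cube L n) :
    Integrable (fun q : Ω' × Ω => F (Function.extend σ (U q.2) (V q.1))) (Q.prod P) :=
  hF.integrable_comp
    (measurable_extend (hU.comp measurable_snd) (hV.comp measurable_fst))
    fun q => extend_mem_cube (hUmem q.2) (hVmem q.1)

lemma abs_integral_extend_sub_integral_pi_le (hF : SepLipBound L F Fb Fl) {M : Type*}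
    [MeasurableSpace M] {μ : Measure M} [IsProbabilityMeasure μ] {Y : Fin n → M → ℝ}
    (hY : ∀ j, Measurable (Y j)) (hYL : ∀ j x, |Y j x| ≤ L) {K : ℕ}
    {blk : Fin n → Fin (K + 1)} {blk' : Fin m → Fin K} {C : ℝ}
    (hcast : ∀ l, blk (σ l) = (blk' l).castSucc)
    (hlast : ∀ j, (¬ ∃ l, σ l = j) → blk j = Fin.last K)
    (hfrozen : ∀ y ∈ cube L n,
      |(∫ x, F (Function.extend σ (fun l => Y (σ l) x) y) ∂μ) -
        ∫ z : Fin K → M, F (Function.extend σ (fun l => Y (σ l) (z (blk' l))) y)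
          ∂(Measure.pi fun _ => μ)| ≤ C) :
    |(∫ y, ∫ x, F (Function.extend σ (fun l => Y (σ l) x) fun j => Y j y) ∂μ ∂μ) -
        ∫ w : Fin (K + 1) → M, F (fun j => Y j (w (blk j))) ∂(Measure.pi fun _ => μ)| ≤ C := by
  rw [integral_pi_eq_integral_extend hcast hlast (hF.integrable_pi hY hYL blk)]
  have hprefix := hF.integrable_extend_prod (P := μ) (Q := μ) (σ := σ)
    (U := fun x l => Y (σ l) x) (V := fun y j => Y j y)
    (by fun_prop) (by fun_prop) (fun _ _ => hYL _ _) fun _ _ => hYL _ _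
  have hblocks := hF.integrable_extend_prod (P := Measure.pi fun _ => μ) (Q := μ) (σ := σ)
    (U := fun (z : Fin K → M) l => Y (σ l) (z (blk' l))) (V := fun y j => Y j y)
    (by fun_prop) (by fun_prop) (fun _ _ => hYL _ _) fun _ _ => hYL _ _
  exact norm_integral_sub_integral_le hprefix.integral_prod_left hblocks.integral_prod_left
    fun y => hfrozen _ fun j => hYL j y

end SepLipBound

lemma FCB.abs_integral_sub_integral_extend_le {M : Type*} [MeasurableSpace M] {μ : Measure M}
    [IsProbabilityMeasure μ] {X : ℕ → M → ℝ} {N : ℕ} {L Cs : ℝ} {R : ℕ → ℝ}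
    (hfcb : FCB μ X N L Cs R) (hXmeas : ∀ n < N, Measurable (X n))
    (hbdd : ∀ n < N, ∀ x, |X n x| ≤ L) {i : ℕ → ℕ} (hi : StrictMono i) {n p : ℕ}
    (hiN : ∀ j < n, i j < N) (hp : 0 < p) (hpn : p < n) {F : (Fin n → ℝ) → ℝ} {Fb Fl : ℝ}
    (hF : SepLipBound L F Fb Fl) :
    |(∫ x, F (fun j => X (i j) x) ∂μ) -
        ∫ y, ∫ x, F (Function.extend (Fin.castLE hpn.le) (fun l => X (i l) x)
          fun j => X (i j) y) ∂μ ∂μ| ≤ Cs * (Fb + Fl) * R (i p - i (p - 1)) := by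
  have hsplit : ∀ x y, (fun j : Fin n => if (j : ℕ) < p then X (i j) x else X (i j) y) =
      Function.extend (Fin.castLE hpn.le) (fun l => X (i l) x) fun j => X (i j) y := by
    intro x y
    funext j
    split_ifs with hj
    · exact ((Fin.castLE_injective hpn.le).extend_apply (fun l => X (i l) x) _ ⟨j, hj⟩).symm
    · rw [Function.extend_apply']
      rintro ⟨l, rfl⟩
      exact hj l.is_lt
  have hint := hF.integrable_extend_prod (P := μ) (Q := μ) (σ := Fin.castLE hpn.le)
    (U := fun x l => X (i l) x) (V := fun y j => X (i j) y)
    (measurable_pi_iff.2 fun l => hXmeas _ (hiN _ (l.is_lt.trans hpn)))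
    (measurable_pi_iff.2 fun j => hXmeas _ (hiN _ j.is_lt))
    (fun x l => hbdd _ (hiN _ (l.is_lt.trans hpn)) x) (fun y j => hbdd _ (hiN _ j.is_lt) y)
  rw [integral_integral_swap hint]
  simpa only [hsplit] using hfcb n i hi hiN p hp hpn F Fb Fl hF

lemma lt_iff_lt_of_mem_Ico {β : Type*} [LinearOrder β] {b : ℕ → β} {K : ℕ}
    (hb : MonotoneOn b (Set.Iic K)) {j : β} {k m : ℕ} (hk : k < K) (hm : m ≤ K)
    (hj : j ∈ Set.Ico (b k) (b (k + 1))) : k < m ↔ j < b m :=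
  ⟨fun h => hj.2.trans_le (hb hk hm h),
    fun h => lt_of_not_ge fun hmk => (h.trans_le (hb hm hk.le hmk)).not_ge hj.1⟩

theorem fcb_multiple_blocks_general
    {M : Type*} [MeasurableSpace M] {μ : Measure M} [IsProbabilityMeasure μ]
    {X : ℕ → M → ℝ} {N : ℕ} (hXmeas : ∀ n < N, Measurable (X n)) {L : ℝ}
    (hbdd : ∀ n < N, ∀ x, |X n x| ≤ L) {Cs : ℝ} {R : ℕ → ℝ} (hfcb : FCB μ X N L Cs R)
    {i : ℕ → ℕ} (hi : StrictMono i) {b : ℕ → ℕ} {K : ℕ} (hK : 1 ≤ K)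
    (hb : StrictMonoOn b (Set.Iic K)) (hiN : ∀ j < b K, i j < N) (blk : Fin (b K) → Fin K)
    (hblk : ∀ j, (j : ℕ) ∈ Set.Ico (b (blk j)) (b ((blk j : ℕ) + 1)))
    {F : (Fin (b K) → ℝ) → ℝ} {Fb Fl : ℝ} (hF : SepLipBound L F Fb Fl) :
    |(∫ x, F (fun j => X (i j) x) ∂μ) -
        ∫ z : Fin K → M, F (fun j => X (i j) (z (blk j))) ∂(Measure.pi fun _ => μ)|
      ≤ Cs * (Fb + Fl) * ∑ k ∈ Finset.Ico 1 K, R (i (b k) - i (b k - 1)) := by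
  induction K, hK using Nat.le_induction with
  | base =>
    have hint : Integrable (fun x => F fun j => X (i j) x) μ :=
      hF.integrable_comp (measurable_pi_iff.2 fun j => hXmeas _ (hiN j j.is_lt))
        fun x j => hbdd _ (hiN j j.is_lt) x
    have heval := integral_comp_eval (μ := fun _ : Fin 1 => μ) (i := 0) hint.aestronglyMeasurable
    simp [Subsingleton.elim blk fun _ => 0, heval]
  | succ K hK ih =>
    have hlt : b K < b (K + 1) := hb K.le_succ (le_refl (K + 1)) K.lt_succ_self
    have hpos : 0 < b K := (Nat.zero_le _).trans_lt (hb (Nat.zero_le _) K.le_succ hK)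
    have hX : ∀ j : Fin (b (K + 1)), Measurable (X (i j)) := fun j => hXmeas _ (hiN j j.is_lt)
    have hXL : ∀ (j : Fin (b (K + 1))) x, |X (i j) x| ≤ L := fun j => hbdd _ (hiN j j.is_lt)
    have hblk_lt : ∀ j, (blk j : ℕ) < K ↔ (j : ℕ) < b K := fun j =>
      lt_iff_lt_of_mem_Ico hb.monotoneOn (blk j).is_lt K.le_succ (hblk j)
    let blk' : Fin (b K) → Fin K := fun l =>
      (blk (l.castLE hlt.le)).castLT ((hblk_lt _).2 l.is_lt)
    have hlast : ∀ j, (¬ ∃ l, Fin.castLE hlt.le l = j) → blk j = Fin.last K := fun j hj =>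
      Fin.eq_last_of_not_lt fun h => hj ⟨⟨j, (hblk_lt j).1 h⟩, rfl⟩
    have hpeel := hfcb.abs_integral_sub_integral_extend_le hXmeas hbdd hi hiN hpos hlt hF
    have hrest := hF.abs_integral_extend_sub_integral_pi_le (μ := μ) hX hXL (blk' := blk')
      (fun _ => rfl) hlast fun y hy =>
        ih (hb.mono (Set.Iic_subset_Iic.2 K.le_succ)) (fun j hj => hiN j (hj.trans hlt)) blk'
          (fun l => hblk (l.castLE hlt.le)) (hF.comp_extend (Fin.castLE_injective hlt.le) hy)
    rw [Finset.sum_Ico_succ_top hK, mul_add]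
    exact (abs_sub_le _ _ _).trans ((add_le_add hpeel hrest).trans_eq (add_comm _ _))

/-- Proposition 2.5 of the paper: if `(X_n)_{0 ≤ n < N}` satisfies the
functional correlation bound with rate function `R` and constant `C_*`, then for every
`K ≥ 2` and every decomposition `I = I₁ ∪ ⋯ ∪ I_K` of an ordered index set
`i 0 < ⋯ < i (n-1) < N` into `K` consecutive blocks (block `k`, `1 ≤ k ≤ K`, consisting of the
coordinates `j` with `b (k-1) ≤ j < b k`, and `blk j` denoting the block of coordinate `j`),
and every separately Lipschitz `F : [-L,L]^n → ℝ`,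
`|∫ F dν_I − ∫ F d(ν_{I₁} ⊗ ⋯ ⊗ ν_{I_K})| ≤ C_* ‖F‖_Lip ∑_{k=1}^{K−1} R(g_k)`,
where `g_k = i (b k) − i (b k − 1)` is the gap between blocks `k` and `k+1`. -/
theorem fcb_multiple_blocks
    {M : Type*} [MeasurableSpace M] (μ : Measure M) [IsProbabilityMeasure μ]
    (X : ℕ → M → ℝ) (hXmeas : ∀ n, Measurable (X n))
    (N : ℕ) (hN : 1 ≤ N) (L : ℝ) (hL : 0 ≤ L)
    (hbdd : ∀ n < N, ∀ x, |X n x| ≤ L)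
    (hcent : ∀ n < N, ∫ x, X n x ∂μ = 0)
    (Cs : ℝ) (R : ℕ → ℝ) (hR : ∀ n, 0 ≤ R n)
    (hfcb : FCB μ X N L Cs R) :
    ∀ K : ℕ, 2 ≤ K →
    ∀ (n : ℕ) (i : ℕ → ℕ), StrictMono i → (∀ j < n, i j < N) →
    ∀ b : ℕ → ℕ, b 0 = 0 → b K = n → (∀ k < K, b k < b (k + 1)) →
    ∀ blk : ℕ → Fin K, (∀ j < n, b (blk j) ≤ j ∧ j < b ((blk j : ℕ) + 1)) →
    ∀ (F : (Fin n → ℝ) → ℝ) (Fb Fl : ℝ), SepLipBound L F Fb Fl →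
      |(∫ x, F (fun j => X (i j) x) ∂μ) -
          ∫ z : Fin K → M, F (fun j => X (i j) (z (blk j))) ∂(Measure.pi fun _ => μ)|
        ≤ Cs * (Fb + Fl) * ∑ k ∈ Finset.Ico 1 K, R (i (b k) - i (b k - 1)) := by
  rintro K hK n i hi hiN b - rfl hb blk hblk F Fb Fl hF
  exact fcb_multiple_blocks_general (fun n _ => hXmeas n) hbdd hfcb hi (one_le_two.trans hK)
    (strictMonoOn_Iic_of_lt_succ hb) hiN (fun j => blk j) (fun j => hblk j j.is_lt) hF

end
end

section
/- Let N ≥ 1, let B_0,…,B_{N−1} be real numbers and B > 0. Suppose there exist C₁ > 0 and an integer M ≥ 1 such that B_v − B_u ≥ C₁M whenever 0 ≤ u < v < N and v − u ≥ M. Then for all 0 ≤ s ≤ t ≤ 1 the set I(s,t) = {0 ≤ k < N : B_k/B ∈ (s,t]} satisfies |I(s,t)| ≤ 3M + B(t−s)/C₁. -/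
set_option autoImplicit false

/-!
Going down from the largest element `m` of a finite set `S ⊆ ℕ`, at most `M` elements of `S` exceed
`m - M`. Discarding them and repeating gives, for each `q` with `q * M < |S|`, a chain of `q + 1`
elements of `S` with consecutive gaps at least `M`, and along such a chain `Bs` grows by at least
`q * (C₁ * M)`. On the level set `Bs` grows by at most `B * (t - s)`, so taking `q` maximal bounds
the cardinality.
-/

section Gap

theorem card_le_card_filter_add_le_add {S : Finset ℕ} {m : ℕ} (hm : ∀ w ∈ S, w ≤ m) (M : ℕ) :
    S.card ≤ (S.filter fun w => w + M ≤ m).card + M := by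
  have h_top : (S.filter fun w => ¬ w + M ≤ m) ⊆ Finset.Ico (m + 1 - M) (m + 1) := by
    intro w hw
    obtain ⟨hwS, hwM⟩ := Finset.mem_filter.1 hw
    have := hm w hwS
    exact Finset.mem_Ico.2 (by omega)
  have h_card := Finset.card_le_card h_top
  have h_split := S.card_filter_add_card_filter_not fun w => w + M ≤ m
  rw [Nat.card_Ico] at h_card
  omega

theorem exists_nsmul_le_sub_of_mul_lt_card {G : Type*} [AddCommGroup G] [Preorder G]
    [IsOrderedAddMonoid G] {f : ℕ → G} {δ : G} {M : ℕ} {S : Finset ℕ}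
    (hgap : ∀ u ∈ S, ∀ v ∈ S, u + M ≤ v → δ ≤ f v - f u) {q : ℕ} (hq : q * M < S.card) :
    ∃ u ∈ S, ∃ v ∈ S, q • δ ≤ f v - f u := by
  induction q generalizing S with
  | zero =>
    obtain ⟨u, hu⟩ := Finset.card_pos.1 (Nat.zero_lt_of_lt hq)
    exact ⟨u, hu, u, hu, by simp⟩
  | succ q ih =>
    have hS : S.Nonempty := Finset.card_pos.1 (Nat.zero_lt_of_lt hq)
    set m := S.max' hS
    set T := S.filter fun w => w + M ≤ m
    have hTS : T ⊆ S := Finset.filter_subset _ S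
    have hqT : q * M < T.card := by
      have : S.card ≤ T.card + M := card_le_card_filter_add_le_add (fun w hw => S.le_max' w hw) M
      rw [Nat.succ_mul] at hq
      omega
    obtain ⟨u, hu, v, hv, huv⟩ :=
      ih (fun u hu v hv => hgap u (hTS hu) v (hTS hv)) hqT
    have hvm : δ ≤ f m - f v :=
      hgap v (hTS hv) m (S.max'_mem hS) (Finset.mem_filter.1 hv).2
    refine ⟨u, hTS hu, m, S.max'_mem hS, ?_⟩
    calc (q + 1) • δ = δ + q • δ := succ_nsmul' δ q
      _ ≤ (f m - f v) + (f v - f u) := add_le_add hvm huv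
      _ = f m - f u := sub_add_sub_cancel ..

variable {K : Type*} [Field K] [LinearOrder K] [IsStrictOrderedRing K]

theorem card_le_add_div_of_gap {f : ℕ → K} {c L : K} {M : ℕ} {S : Finset ℕ} (hc : 0 < c)
    (hM : 0 < M) (hL : 0 ≤ L) (hgap : ∀ u ∈ S, ∀ v ∈ S, u + M ≤ v → c * M ≤ f v - f u)
    (hosc : ∀ u ∈ S, ∀ v ∈ S, f v - f u ≤ L) :
    (S.card : K) ≤ M + L / c := by
  rcases S.eq_empty_or_nonempty with rfl | hS
  · simp only [Finset.card_empty, Nat.cast_zero]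
    positivity
  set q := (S.card - 1) / M
  have hS_pos : 0 < S.card := hS.card_pos
  have hq_lt : q * M < S.card := by
    have : q * M ≤ S.card - 1 := Nat.div_mul_le_self _ M
    omega
  have hS_le : S.card ≤ M + q * M := by
    have : S.card - 1 < q * M + M := Nat.lt_div_mul_add hM
    omega
  obtain ⟨u, hu, v, hv, huv⟩ := exists_nsmul_le_sub_of_mul_lt_card hgap hq_lt
  have hq_le : (q * M : K) ≤ L / c := by
    rw [le_div_iff₀ hc]
    calc (q * M : K) * c = q • (c * M) := by rw [nsmul_eq_mul]; ring
      _ ≤ f v - f u := huv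
      _ ≤ L := hosc u hu v hv
  calc (S.card : K) ≤ M + q * M := mod_cast hS_le
    _ ≤ M + L / c := by gcongr

theorem card_level_set_le_general {N : ℕ} {Bs : ℕ → K} {B C₁ : K} {M : ℕ} (hB : 0 < B)
    (hC₁ : 0 < C₁) (hM : 1 ≤ M)
    (hgap : ∀ u v : ℕ, u < v → v < N → M ≤ v - u → C₁ * M ≤ Bs v - Bs u)
    {s t : K} (hst : s ≤ t) :
    (((Finset.range N).filter fun k => s < Bs k / B ∧ Bs k / B ≤ t).card : K)
      ≤ M + B * (t - s) / C₁ := by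
  refine card_le_add_div_of_gap (f := Bs) hC₁ hM (mul_nonneg hB.le (sub_nonneg.2 hst)) ?_ ?_
  · intro u _ v hv huv
    have hvN : v < N := Finset.mem_range.1 (Finset.mem_filter.1 hv).1
    exact hgap u v (by omega) hvN (by omega)
  · intro u hu v hv
    have h_lower : s * B < Bs u := (lt_div_iff₀ hB).1 (Finset.mem_filter.1 hu).2.1
    have h_upper : Bs v ≤ t * B := (div_le_iff₀ hB).1 (Finset.mem_filter.1 hv).2.2
    linarith

end Gap

/-- Let `N ≥ 1`, `B₀,…,B_{N−1}` real, `B > 0`.  If there are `C₁ > 0` and an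
integer `M ≥ 1` such that `B_v − B_u ≥ C₁·M` whenever `0 ≤ u < v < N` and `v − u ≥ M`, then for
all `0 ≤ s ≤ t ≤ 1` the set `I(s,t) = {0 ≤ k < N : B_k/B ∈ (s,t]}` satisfies
`|I(s,t)| ≤ 3M + B(t−s)/C₁`. -/
theorem card_level_set_le (N : ℕ) (hN : 1 ≤ N) (Bs : ℕ → ℝ) (B : ℝ) (hB : 0 < B)
    (C₁ : ℝ) (hC₁ : 0 < C₁) (M : ℕ) (hM : 1 ≤ M)
    (hgap : ∀ u v : ℕ, u < v → v < N → M ≤ v - u → C₁ * M ≤ Bs v - Bs u) :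
    ∀ s t : ℝ, 0 ≤ s → s ≤ t → t ≤ 1 →
      ((((Finset.range N).filter fun k => s < Bs k / B ∧ Bs k / B ≤ t).card : ℝ))
        ≤ 3 * M + B * (t - s) / C₁ := by
  intro s t _ hst _
  have h := card_level_set_le_general hB hC₁ hM hgap hst
  linarith [(Nat.cast_nonneg M : (0 : ℝ) ≤ M)]
end

section
/- Let (X_n)_{n≥0} be real random variables on (M,𝓕,μ) with ‖X_n‖_∞ ≤ L and μ(X_n) = 0 for all n ≥ 0. Assume: (a) for every N ≥ 1 the sequence (X_n)_{0≤n<N} satisfies the functional correlation bound with constant C_* and a nonincreasing rate function R (independent of N) with ∑_{n=1}^∞ R(n)^{1/2} < ∞, where we set R(0) = 1; (b) there exist C₁ > 0, N₀ ≥ 1 and integers M_N ≥ 1 such that for every N ≥ N₀, B_v^{(N)} − B_u^{(N)} ≥ C₁ M_N whenever 0 ≤ u < v < N and v − u ≥ M_N, where B_u^{(N)} = ∑_{i=0}^{u−1} ∑_{j=0}^{N−1} μ(X_iX_j); and (c) B_N := B_N^{(N)} > 0 for N ≥ N₀. Then there exists a constant C > 0, depending only on L, C_*, C₁ and ∑_{n}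 R(n)^{1/2}, such that for all N ≥ N₀ and all 0 ≤ s ≤ t ≤ 1, μ[(W_N(t) − W_N(s))⁴] ≤ C(|t−s|² + (M_N/B_N)²). -/
set_option autoImplicit false

open MeasureTheory Filter
open scoped ENNReal NNReal Topology

noncomputable section

/-- The covariance `σ_{i,j} = μ(X_i X_j)`. -/
def sigmaCov {M : Type*} [MeasurableSpace M] (μ : Measure M) (X : ℕ → M → ℝ) (i j : ℕ) : ℝ :=
  ∫ x, X i x * X j x ∂μ

/-- `B_u^{(N)} = ∑_{i<u} ∑_{j<N} μ(X_i X_j)`. -/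
def Bpart {M : Type*} [MeasurableSpace M] (μ : Measure M) (X : ℕ → M → ℝ) (N u : ℕ) : ℝ :=
  ∑ i ∈ Finset.range u, ∑ j ∈ Finset.range N, sigmaCov μ X i j

/-- `B_N = B_N^{(N)}`. -/
def Bvar {M : Type*} [MeasurableSpace M] (μ : Measure M) (X : ℕ → M → ℝ) (N : ℕ) : ℝ :=
  Bpart μ X N N

/-- The value of the partial-sum process at time `t ∈ [0,1]`:
`W_N(t) = B_N^{-1/2} ∑_{n<N} θ_n^{(N)}(t) X_n` where `θ_n^{(N)}(t) = 1_{t ≥ B_n^{(N)}/B_N}`. -/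
def WNval {M : Type*} [MeasurableSpace M] (μ : Measure M) (X : ℕ → M → ℝ) (N : ℕ)
    (t : ℝ) (x : M) : ℝ :=
  (Bvar μ X N) ^ (-(1:ℝ)/2) *
    ∑ n ∈ Finset.range N, (if Bpart μ X N n / Bvar μ X N ≤ t then (1:ℝ) else 0) * X n x

/-!
For a sorted quadruple `i ≤ j ≤ k ≤ l` the outer gaps alone control the moment: since the `X_n` are
centred, splitting off `X_i` or `X_l`, whichever is followed or preceded by the larger gap, gives
`|μ(X_i X_j X_k X_l)| ≤ K R(max(j - i, l - k)) ≤ K √R(j - i) √R(l - k)`. Summing over all quadruples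
from `J` factorises, so the fourth moment of `∑_{n ∈ J} X_n` is `O(|J|²)` because `√R` is summable.
The increment of `W_N` is `B_N^{-1/2}` times such a sum over the `n` with `s < B_n / B_N ≤ t`; as
`B_n` oscillates by at most `(t - s) B_N` over these indices, the growth condition forces
`|J| ≤ M_N + (t - s) B_N / C₁`.
-/

theorem mul_succ_sub_le_of_growth {B : ℕ → ℝ} {N m : ℕ} {c : ℝ} (hc : 0 ≤ c) (hm : 1 ≤ m)
    (hB : ∀ u v, u < v → v < N → m ≤ v - u → c * m ≤ B v - B u) {u v : ℕ} (huv : u + m ≤ v)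
    (hv : v < N) : c * ((v - u + 1 : ℕ) : ℝ) ≤ B v - B u + c * m := by
  induction hd : v - u using Nat.strong_induction_on generalizing u with
  | _ d ih =>
  have hfirst := hB u (u + m) (by omega) (by omega) (by omega)
  by_cases hlong : u + m + m ≤ v
  · have hrest := ih (v - (u + m)) (by omega) hlong rfl
    have hsplit : (d + 1 : ℕ) = (v - (u + m) + 1) + m := by omega
    rw [hsplit]
    push_cast at hrest ⊢
    linarith
  · have hwhole := hB u v (by omega) hv (by omega)
    have hd2 : ((d + 1 : ℕ) : ℝ) ≤ m + m := by exact_mod_cast (by omega : d + 1 ≤ m + m)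
    linarith [mul_le_mul_of_nonneg_left hd2 hc]

theorem mul_card_le_of_growth {B : ℕ → ℝ} {N m : ℕ} {c D : ℝ} (hc : 0 ≤ c) (hm : 1 ≤ m)
    (hB : ∀ u v, u < v → v < N → m ≤ v - u → c * m ≤ B v - B u) (hD : 0 ≤ D) {J : Finset ℕ}
    (hJN : J ⊆ Finset.range N) (hJD : ∀ u ∈ J, ∀ v ∈ J, B v - B u ≤ D) :
    c * (J.card : ℝ) ≤ D + c * m := by
  rcases J.eq_empty_or_nonempty with rfl | hJ
  · simpa using add_nonneg hD (mul_nonneg hc m.cast_nonneg)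
  set u := J.min' hJ
  set v := J.max' hJ
  have hu : u ∈ J := J.min'_mem hJ
  have hv : v ∈ J := J.max'_mem hJ
  have hcard : J.card ≤ v - u + 1 := by
    have hsub : J ⊆ Finset.Icc u v := fun w hw =>
      Finset.mem_Icc.mpr ⟨J.min'_le w hw, J.le_max' w hw⟩
    have huv : u ≤ v := J.min'_le v hv
    have := Finset.card_le_card hsub
    rw [Nat.card_Icc] at this
    omega
  by_cases hshort : v - u < m
  · have : c * (J.card : ℝ) ≤ c * m := by gcongr; omega
    linarith
  · calc c * (J.card : ℝ) ≤ c * ((v - u + 1 : ℕ) : ℝ) := by gcongr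
      _ ≤ B v - B u + c * m :=
        mul_succ_sub_le_of_growth hc hm hB (by omega) (Finset.mem_range.mp (hJN hv))
      _ ≤ D + c * m := by gcongr; exact hJD u hu v hv

theorem abs_prod_le_pow_card {ι α : Type*} [CommRing α] [LinearOrder α] [IsStrictOrderedRing α]
    {s : Finset ι} {f : ι → α} {c : α} (hf : ∀ a ∈ s, |f a| ≤ c) :
    |∏ a ∈ s, f a| ≤ c ^ s.card := by
  rw [Finset.abs_prod, ← Finset.prod_const]
  exact Finset.prod_le_prod (fun a _ => abs_nonneg _) hf

theorem sum_dist_le_two_mul_tsum {r : ℕ → ℝ} (hr : ∀ n, 0 ≤ r n) (hs : Summable r)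
    (J : Finset ℕ) (i : ℕ) : ∑ j ∈ J, r (Nat.dist i j) ≤ 2 * ∑' n, r n := by
  have hinj (A : Finset ℕ) (hA : Set.InjOn (Nat.dist i) A) :
      ∑ j ∈ A, r (Nat.dist i j) ≤ ∑' n, r n := by
    rw [← Finset.sum_image (f := r) hA]
    exact hs.sum_le_tsum _ fun n _ => hr n
  have hle := hinj {j ∈ J | j ≤ i} fun x hx y hy h => by
    simp only [Finset.mem_coe, Finset.mem_filter, Nat.dist] at hx hy h
    omega
  have hgt := hinj {j ∈ J | ¬ j ≤ i} fun x hx y hy h => by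
    simp only [Finset.mem_coe, Finset.mem_filter, Nat.dist] at hx hy h
    omega
  rw [← Finset.sum_filter_add_sum_filter_not J (fun j => j ≤ i), two_mul]
  exact add_le_add hle hgt

theorem sum_piFinset_le_factorial_nsmul_of_monotone {α β : Type*} [LinearOrder α]
    [AddCommMonoid β] [PartialOrder β] [IsOrderedAddMonoid β] {k : ℕ} {f g : (Fin k → α) → β}
    {J : Finset α} (hf : ∀ v, ∀ σ : Equiv.Perm (Fin k), f (v ∘ σ) = f v) (hg : ∀ v, 0 ≤ g v)
    (hfg : ∀ v ∈ Fintype.piFinset fun _ => J, Monotone v → f v ≤ g v) :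
    ∑ v ∈ Fintype.piFinset (fun _ => J), f v ≤
      k.factorial • ∑ v ∈ Fintype.piFinset (fun _ => J), g v := by
  have hperm (σ : Equiv.Perm (Fin k)) {v : Fin k → α} (hv : v ∈ Fintype.piFinset fun _ => J) :
      v ∘ σ ∈ Fintype.piFinset fun _ => J :=
    Fintype.mem_piFinset.mpr fun a => Fintype.mem_piFinset.mp hv (σ a)
  calc ∑ v ∈ Fintype.piFinset (fun _ => J), f v
      ≤ ∑ v ∈ Fintype.piFinset (fun _ => J), ∑ σ : Equiv.Perm (Fin k), g (v ∘ σ) := by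
        refine Finset.sum_le_sum fun v hv => ?_
        calc f v = f (v ∘ Tuple.sort v) := (hf v _).symm
          _ ≤ g (v ∘ Tuple.sort v) := hfg _ (hperm _ hv) (Tuple.monotone_sort v)
          _ ≤ ∑ σ : Equiv.Perm (Fin k), g (v ∘ σ) :=
            Finset.single_le_sum (f := fun σ : Equiv.Perm (Fin k) => g (v ∘ σ))
              (fun σ _ => hg _) (Finset.mem_univ _)
    _ = ∑ σ : Equiv.Perm (Fin k), ∑ v ∈ Fintype.piFinset (fun _ => J), g v := by
        rw [Finset.sum_comm]
        refine Finset.sum_congr rfl fun σ _ => ?_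
        refine Finset.sum_nbij' (· ∘ σ) (· ∘ σ.symm) (fun v => hperm σ) (fun v => hperm σ.symm)
          (fun v _ => ?_) (fun v _ => ?_) (fun v _ => rfl) <;>
        simp [Function.comp_assoc]
    _ = k.factorial • ∑ v ∈ Fintype.piFinset (fun _ => J), g v := by
        rw [Finset.sum_const, Finset.card_univ, Fintype.card_perm, Fintype.card_fin]

theorem sum_piFinset_fin_four_mul {α β : Type*} [NonUnitalNonAssocSemiring β] (J : Finset α)
    (f g : α → α → β) :
    ∑ v ∈ Fintype.piFinset (fun _ : Fin 4 => J), f (v 0) (v 1) * g (v 2) (v 3) =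
      (∑ i ∈ J, ∑ j ∈ J, f i j) * ∑ i ∈ J, ∑ j ∈ J, g i j := by
  simp_rw [← Finset.sum_product', Finset.sum_mul_sum, ← Finset.sum_product']
  refine Finset.sum_nbij' (fun v => ((v 0, v 1), (v 2, v 3)))
    (fun p => ![p.1.1, p.1.2, p.2.1, p.2.2]) ?_ ?_ ?_ ?_ ?_
  · simp +contextual
  · simp +contextual [Fin.forall_fin_succ]
  · intro v _
    ext a
    fin_cases a <;> rfl
  · simp
  · simp

theorem update_mem_cube {L : ℝ} {n : ℕ} {x : Fin n → ℝ} (hx : x ∈ cube L n) (j : Fin n)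
    {a : ℝ} (ha : |a| ≤ L) : Function.update x j a ∈ cube L n := by
  intro k
  rcases eq_or_ne k j with rfl | hkj
  · simpa using ha
  · simpa [Function.update_of_ne hkj] using hx k

namespace SepLipBound

variable {L : ℝ} {n : ℕ}

theorem coord (q : Fin n) : SepLipBound L (fun x => x q) L 1 where
  bound x hx := hx q
  lip j x _ a b _ _ := by
    rcases eq_or_ne q j with rfl | hqj
    · simp
    · simp [Function.update_of_ne hqj]

theorem const (c : ℝ) : SepLipBound L (fun _ : Fin n → ℝ => c) |c| 0 where
  bound _ _ := le_rfl
  lip _ _ _ _ _ _ _ := by simp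

theorem mul {F G : (Fin n → ℝ) → ℝ} {Fb Fl Gb Gl : ℝ} (hF : SepLipBound L F Fb Fl)
    (hG : SepLipBound L G Gb Gl) :
    SepLipBound L (fun x => F x * G x) (Fb * Gb) (Fb * Gl + Fl * Gb) where
  bound x hx := by
    rw [abs_mul]
    exact mul_le_mul (hF.bound x hx) (hG.bound x hx) (abs_nonneg _)
      ((abs_nonneg _).trans (hF.bound x hx))
  lip j x hx a b ha hb := by
    have hFa := hF.bound _ (update_mem_cube hx j ha)
    have hGb := hG.bound _ (update_mem_cube hx j hb)
    have hFlip := hF.lip j x hx a b ha hb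
    have hGlip := hG.lip j x hx a b ha hb
    set Fxa := F (Function.update x j a)
    set Fxb := F (Function.update x j b)
    set Gxa := G (Function.update x j a)
    set Gxb := G (Function.update x j b)
    calc |Fxa * Gxa - Fxb * Gxb| = |Fxa * (Gxa - Gxb) + (Fxa - Fxb) * Gxb| := by congr 1; ring
      _ ≤ |Fxa| * |Gxa - Gxb| + |Fxa - Fxb| * |Gxb| := by
        simpa only [abs_mul] using abs_add_le (Fxa * (Gxa - Gxb)) ((Fxa - Fxb) * Gxb)
      _ ≤ Fb * (Gl * |a - b|) + Fl * |a - b| * Gb :=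
        add_le_add (mul_le_mul hFa hGlip (abs_nonneg _) ((abs_nonneg _).trans hFa))
          (mul_le_mul hFlip hGb (abs_nonneg _) ((abs_nonneg _).trans hFlip))
      _ = (Fb * Gl + Fl * Gb) * |a - b| := by ring

theorem prod_coord {ι : Type*} (s : Finset ι) (q : ι → Fin n) :
    SepLipBound L (fun x => ∏ a ∈ s, x (q a)) (L ^ s.card) (s.card * L ^ (s.card - 1)) := by
  classical
  induction s using Finset.induction_on with
  | empty => simpa using const (L := L) (n := n) 1
  | insert a s ha ih =>
    have hlip : L * (s.card * L ^ (s.card - 1)) + 1 * L ^ s.card =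
        ((s.card + 1 : ℕ) : ℝ) * L ^ (s.card + 1 - 1) := by
      rcases Nat.eq_zero_or_pos s.card with h0 | hpos
      · simp [h0]
      · rw [mul_left_comm, mul_pow_sub_one hpos.ne']
        push_cast
        ring
    simp only [Finset.prod_insert ha, Finset.card_insert_of_notMem ha]
    rw [← hlip, pow_succ']
    exact (coord (q a)).mul ih

end SepLipBound

/-- The increasing enumeration of `{0, …, b} ∪ {c, c + 1, …}` for `b < c`, the index set to which
the functional correlation bound is applied. -/
def gapEnum (b c m : ℕ) : ℕ := if m ≤ b then m else m + (c - b - 1)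

theorem gapEnum_strictMono (b c : ℕ) : StrictMono (gapEnum b c) :=
  strictMono_nat_of_lt_succ fun m => by
    unfold gapEnum
    split_ifs <;> omega

theorem exists_gapEnum_eq {b c N k : ℕ} (hbc : b < c) (hcN : c < N)
    (hk : k ≤ b ∨ c ≤ k) (hkN : k < N) :
    ∃ q : Fin (N - (c - b - 1)), gapEnum b c q = k ∧ ((q : ℕ) < b + 1 ↔ k ≤ b) := by
  by_cases hkb : k ≤ b
  · exact ⟨⟨k, by omega⟩, by simp [gapEnum, hkb], by dsimp only; omega⟩
  · refine ⟨⟨k - (c - b - 1), by omega⟩, ?_, by dsimp only; omega⟩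
    simp only [gapEnum]
    split_ifs <;> omega

/-- The constant in the bounds for mixed moments of order `k`: the trivial bound `L ^ k`, plus
`Cs` times the separately Lipschitz norm of a product of `k` coordinates on the cube. -/
def momentConst (L Cs : ℝ) (k : ℕ) : ℝ := L ^ k + Cs * (L ^ k + k * L ^ (k - 1))

theorem momentConst_nonneg {L Cs : ℝ} (hL : 0 ≤ L) (hCs : 0 ≤ Cs) (k : ℕ) :
    0 ≤ momentConst L Cs k := by
  unfold momentConst
  positivity

section Moments

variable {M : Type*} [MeasurableSpace M] {μ : Measure M} {X : ℕ → M → ℝ} {N : ℕ} {L Cs : ℝ}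
  {R : ℕ → ℝ} {ι : Type*} [Fintype ι]

theorem FCB.abs_integral_prod_sub_mul_le [DecidableEq ι] (hF : FCB μ X N L Cs R) {v : ι → ℕ}
    (hv : ∀ a, v a < N) {s : Finset ι} {b c : ℕ} (hbc : b < c) (hcN : c < N)
    (hb : ∀ a ∈ s, v a ≤ b) (hc : ∀ a ∉ s, c ≤ v a) :
    |(∫ x, ∏ a, X (v a) x ∂μ) - (∫ x, ∏ a ∈ s, X (v a) x ∂μ) * ∫ x, ∏ a ∈ sᶜ, X (v a) x ∂μ| ≤
      Cs * (L ^ Fintype.card ι + Fintype.card ι * L ^ (Fintype.card ι - 1)) * R (c - b) := by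
  have hmem (a : ι) : v a ≤ b ↔ a ∈ s :=
    ⟨fun h => by_contra fun ha => by have := hc a ha; omega, hb a⟩
  choose q hq hqb using fun a => exists_gapEnum_eq hbc hcN
    ((em (a ∈ s)).imp (hb a) (hc a)) (hv a)
  have hbound := hF _ (gapEnum b c) (gapEnum_strictMono b c)
    (fun j hj => by unfold gapEnum; split_ifs <;> omega) (b + 1) b.succ_pos (by omega)
    _ _ _ (SepLipBound.prod_coord Finset.univ q)
  have hgap : gapEnum b c (b + 1) - gapEnum b c (b + 1 - 1) = c - b := by
    simp only [gapEnum]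
    split_ifs <;> omega
  have hsplit (x y : M) : ∏ a, (if a ∈ s then X (v a) x else X (v a) y) =
      (∏ a ∈ s, X (v a) x) * ∏ a ∈ sᶜ, X (v a) y := by
    simp [Finset.prod_ite, Finset.filter_not, Finset.compl_eq_univ_sdiff]
  simpa only [hq, hqb, hmem, hgap, hsplit, integral_const_mul, integral_mul_const,
    Finset.card_univ] using hbound

theorem integrable_prod_of_abs_le [IsFiniteMeasure μ] (hX : ∀ n < N, Measurable (X n))
    (hb : ∀ n < N, ∀ x, |X n x| ≤ L) {v : ι → ℕ} (hv : ∀ a, v a < N) :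
    Integrable (fun x => ∏ a, X (v a) x) μ :=
  .of_bound (Finset.measurable_prod _ fun a _ => hX _ (hv a)).aestronglyMeasurable
    (L ^ Fintype.card ι) (.of_forall fun x => abs_prod_le_pow_card fun a _ => hb _ (hv a) x)

theorem integral_sum_pow [IsFiniteMeasure μ] (hX : ∀ n < N, Measurable (X n))
    (hb : ∀ n < N, ∀ x, |X n x| ≤ L) {J : Finset ℕ} (hJ : J ⊆ Finset.range N) (k : ℕ) :
    ∫ x, (∑ n ∈ J, X n x) ^ k ∂μ =
      ∑ v ∈ Fintype.piFinset (fun _ : Fin k => J), ∫ x, ∏ a, X (v a) x ∂μ := by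
  simp_rw [Finset.sum_pow']
  exact integral_finsetSum _ fun v hv => integrable_prod_of_abs_le hX hb fun a =>
    Finset.mem_range.mp (hJ (Fintype.mem_piFinset.mp hv a))

variable [IsProbabilityMeasure μ]

theorem FCB.abs_integral_prod_le [DecidableEq ι] (hF : FCB μ X N L Cs R) (hL : 0 ≤ L)
    (hCs : 0 ≤ Cs) (hb : ∀ n < N, ∀ x, |X n x| ≤ L) (hR : ∀ n, 0 ≤ R n) (hR0 : R 0 = 1)
    {v : ι → ℕ} (hv : ∀ a, v a < N) {s : Finset ι} {b c : ℕ} (hbc : b ≤ c) (hcN : c < N)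
    (hs : ∀ a ∈ s, v a ≤ b) (hsc : ∀ a ∉ s, c ≤ v a)
    (hzero : (∫ x, ∏ a ∈ s, X (v a) x ∂μ) * ∫ x, ∏ a ∈ sᶜ, X (v a) x ∂μ = 0) :
    |∫ x, ∏ a, X (v a) x ∂μ| ≤ momentConst L Cs (Fintype.card ι) * R (c - b) := by
  rw [momentConst, add_mul]
  rcases hbc.eq_or_lt with rfl | hlt
  · have htriv : |∫ x, ∏ a, X (v a) x ∂μ| ≤ L ^ Fintype.card ι := by
      simpa using norm_integral_le_of_norm_le_const (μ := μ) (f := fun x => ∏ a, X (v a) x)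
        (.of_forall fun x => abs_prod_le_pow_card fun a _ => hb (v a) (hv a) x)
    rw [Nat.sub_self, hR0, mul_one, mul_one]
    exact htriv.trans (le_add_of_nonneg_right (by positivity))
  · have hcorr := hF.abs_integral_prod_sub_mul_le hv hlt hcN hs hsc
    rw [hzero, sub_zero] at hcorr
    exact hcorr.trans (le_add_of_nonneg_left (mul_nonneg (by positivity) (hR _)))

theorem FCB.abs_integral_prod_le_of_monotone (hF : FCB μ X N L Cs R) (hL : 0 ≤ L)
    (hCs : 0 ≤ Cs) (hb : ∀ n < N, ∀ x, |X n x| ≤ L) (h0 : ∀ n < N, ∫ x, X n x ∂μ = 0)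
    (hR : ∀ n, 0 ≤ R n) (hanti : Antitone R) (hR0 : R 0 = 1) {k : ℕ} {v : Fin (k + 2) → ℕ}
    (hv : ∀ a, v a < N) (hmono : Monotone v) :
    |∫ x, ∏ a, X (v a) x ∂μ| ≤ momentConst L Cs (k + 2) *
      (√(R (v 1 - v 0)) * √(R (v (Fin.last _) - v (Fin.last k).castSucc))) := by
  have hfirst := hF.abs_integral_prod_le hL hCs hb hR hR0 hv (s := {0})
    (hmono (Fin.zero_le 1)) (hv 1) (by simp)
    (fun a ha => hmono (Fin.one_le_of_ne_zero (by simpa using ha))) (by simp [h0 _ (hv 0)])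
  have hlast := hF.abs_integral_prod_le hL hCs hb hR hR0 hv (s := {Fin.last _}ᶜ)
    (hmono (Fin.le_last (Fin.last k).castSucc)) (hv (Fin.last _))
    (fun a ha => hmono (Fin.le_castSucc_iff.mpr (Fin.lt_last_iff_ne_last.mpr (by simpa using ha))))
    (by simp) (by simp [h0 _ (hv _)])
  rw [Fintype.card_fin] at hfirst hlast
  have hsqrt {g p q : ℕ} (hp : p ≤ g) (hq : q ≤ g) : R g ≤ √(R p) * √(R q) := by
    rw [← Real.mul_self_sqrt (hR g)]
    gcongr <;> exact hanti ‹_›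
  have hK := momentConst_nonneg hL hCs (k + 2)
  rcases le_total (v (Fin.last _) - v (Fin.last k).castSucc) (v 1 - v 0) with hle | hle
  · exact hfirst.trans (mul_le_mul_of_nonneg_left (hsqrt le_rfl hle) hK)
  · exact hlast.trans (mul_le_mul_of_nonneg_left (hsqrt hle le_rfl) hK)

theorem FCB.integral_sum_pow_four_le (hF : FCB μ X N L Cs R) (hL : 0 ≤ L) (hCs : 0 ≤ Cs)
    (hX : ∀ n < N, Measurable (X n)) (hb : ∀ n < N, ∀ x, |X n x| ≤ L)
    (h0 : ∀ n < N, ∫ x, X n x ∂μ = 0) (hR : ∀ n, 0 ≤ R n) (hanti : Antitone R)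
    (hR0 : R 0 = 1) (hsum : Summable fun n => √(R n)) {J : Finset ℕ}
    (hJ : J ⊆ Finset.range N) :
    ∫ x, (∑ n ∈ J, X n x) ^ 4 ∂μ ≤
      96 * momentConst L Cs 4 * (∑' n, √(R n)) ^ 2 * (J.card : ℝ) ^ 2 := by
  set K := momentConst L Cs 4
  have hK : 0 ≤ K := momentConst_nonneg hL hCs 4
  let ρ (i j : ℕ) : ℝ := √(R (Nat.dist i j))
  have hsorted (v : Fin 4 → ℕ) (hv : v ∈ Fintype.piFinset fun _ => J) (hmono : Monotone v) :
      ∫ x, ∏ a, X (v a) x ∂μ ≤ K * (ρ (v 0) (v 1) * ρ (v 2) (v 3)) := by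
    simp only [ρ, Nat.dist_eq_sub_of_le (hmono (show (0 : Fin 4) ≤ 1 by decide)),
      Nat.dist_eq_sub_of_le (hmono (show (2 : Fin 4) ≤ 3 by decide))]
    exact (le_abs_self _).trans (hF.abs_integral_prod_le_of_monotone hL hCs hb h0 hR hanti hR0
      (fun a => Finset.mem_range.mp (hJ (Fintype.mem_piFinset.mp hv a))) hmono)
  have hpairs : ∑ i ∈ J, ∑ j ∈ J, ρ i j ≤ J.card * (2 * ∑' n, √(R n)) := by
    rw [← nsmul_eq_mul]
    exact Finset.sum_le_card_nsmul _ _ _ fun i _ =>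
      sum_dist_le_two_mul_tsum (fun n => Real.sqrt_nonneg _) hsum J i
  calc ∫ x, (∑ n ∈ J, X n x) ^ 4 ∂μ
      = ∑ v ∈ Fintype.piFinset (fun _ : Fin 4 => J), ∫ x, ∏ a, X (v a) x ∂μ :=
        integral_sum_pow hX hb hJ 4
    _ ≤ (4).factorial • ∑ v ∈ Fintype.piFinset (fun _ : Fin 4 => J),
          K * (ρ (v 0) (v 1) * ρ (v 2) (v 3)) := by
        refine sum_piFinset_le_factorial_nsmul_of_monotone (fun v σ => ?_) (fun v => ?_) hsorted
        · exact integral_congr_ae (.of_forall fun x => Equiv.prod_comp σ fun a => X (v a) x)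
        · positivity
    _ = 24 * K * (∑ i ∈ J, ∑ j ∈ J, ρ i j) ^ 2 := by
        rw [← Finset.mul_sum, sum_piFinset_fin_four_mul, nsmul_eq_mul]
        norm_num [Nat.factorial]
        ring
    _ ≤ 24 * K * (J.card * (2 * ∑' n, √(R n))) ^ 2 := by gcongr
    _ = 96 * K * (∑' n, √(R n)) ^ 2 * (J.card : ℝ) ^ 2 := by ring

end Moments

section PartialSumProcess

variable {M : Type*} [MeasurableSpace M] {μ : Measure M} {X : ℕ → M → ℝ} {N : ℕ} {s t : ℝ}

variable (μ X N s t) in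
/-- The indices `n < N` contributing to the increment `W_N(t) - W_N(s)`, namely those with
`s < B_n^{(N)} / B_N ≤ t`. -/
def incrementIndices : Finset ℕ :=
  {n ∈ Finset.range N | s < Bpart μ X N n / Bvar μ X N ∧ Bpart μ X N n / Bvar μ X N ≤ t}

theorem incrementIndices_subset_range : incrementIndices μ X N s t ⊆ Finset.range N :=
  Finset.filter_subset _ _

theorem WNval_sub_WNval (hst : s ≤ t) (x : M) :
    WNval μ X N t x - WNval μ X N s x =
      Bvar μ X N ^ (-(1 : ℝ) / 2) * ∑ n ∈ incrementIndices μ X N s t, X n x := by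
  rw [WNval, WNval, ← mul_sub, ← Finset.sum_sub_distrib, incrementIndices, Finset.sum_filter]
  congr 1
  refine Finset.sum_congr rfl fun n _ => ?_
  split_ifs <;> grind

theorem WNval_sub_WNval_pow_four (hst : s ≤ t) (hB : 0 < Bvar μ X N) (x : M) :
    (WNval μ X N t x - WNval μ X N s x) ^ 4 =
      (Bvar μ X N ^ 2)⁻¹ * (∑ n ∈ incrementIndices μ X N s t, X n x) ^ 4 := by
  have hpow : (Bvar μ X N ^ (-(1 : ℝ) / 2)) ^ 4 = (Bvar μ X N ^ 2)⁻¹ := by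
    rw [← Real.rpow_mul_natCast hB.le, ← Real.rpow_natCast, ← Real.rpow_neg hB.le]
    norm_num
  rw [WNval_sub_WNval hst, mul_pow, hpow]

theorem card_incrementIndices_div_le {C₁ : ℝ} {m : ℕ} (hC₁ : 0 < C₁) (hm : 1 ≤ m)
    (hgrowth : ∀ u v, u < v → v < N → m ≤ v - u →
      C₁ * m ≤ Bpart μ X N v - Bpart μ X N u)
    (hB : 0 < Bvar μ X N) (hst : s ≤ t) :
    ((incrementIndices μ X N s t).card : ℝ) / Bvar μ X N ≤ (t - s) / C₁ + m / Bvar μ X N := by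
  set B := Bvar μ X N
  have hosc : ∀ u ∈ incrementIndices μ X N s t, ∀ v ∈ incrementIndices μ X N s t,
      Bpart μ X N v - Bpart μ X N u ≤ (t - s) * B := by
    intro u hu v hv
    have hsu := (lt_div_iff₀ hB).mp (Finset.mem_filter.mp hu).2.1
    have hvt := (div_le_iff₀ hB).mp (Finset.mem_filter.mp hv).2.2
    linarith
  have hcard := mul_card_le_of_growth hC₁.le hm hgrowth
    (mul_nonneg (sub_nonneg.mpr hst) hB.le) incrementIndices_subset_range hosc
  rw [div_add_div _ _ hC₁.ne' hB.ne', div_le_div_iff₀ hB (by positivity)]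
  linarith [mul_le_mul_of_nonneg_right hcard hB.le]

end PartialSumProcess

theorem fourth_moment_bound_general {M : Type*} [MeasurableSpace M] {μ : Measure M}
    [IsProbabilityMeasure μ] {X : ℕ → M → ℝ} {N m : ℕ} {L Cs C₁ s t : ℝ} {R : ℕ → ℝ}
    (hL : 0 ≤ L) (hCs : 0 ≤ Cs) (hC₁ : 0 < C₁) (hX : ∀ n < N, Measurable (X n))
    (hb : ∀ n < N, ∀ x, |X n x| ≤ L) (h0 : ∀ n < N, ∫ x, X n x ∂μ = 0) (hR : ∀ n, 0 ≤ R n)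
    (hanti : Antitone R) (hR0 : R 0 = 1) (hsum : Summable fun n => √(R n))
    (hF : FCB μ X N L Cs R) (hm : 1 ≤ m)
    (hgrowth : ∀ u v, u < v → v < N → m ≤ v - u →
      C₁ * m ≤ Bpart μ X N v - Bpart μ X N u)
    (hB : 0 < Bvar μ X N) (hst : s ≤ t) :
    ∫ x, (WNval μ X N t x - WNval μ X N s x) ^ 4 ∂μ ≤
      192 * momentConst L Cs 4 * (∑' n, √(R n)) ^ 2 * (1 + 1 / C₁ ^ 2) *
        ((t - s) ^ 2 + (m / Bvar μ X N) ^ 2) := by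
  set B := Bvar μ X N
  set J := incrementIndices μ X N s t
  set A := momentConst L Cs 4 * (∑' n, √(R n)) ^ 2
  have hA : 0 ≤ A := mul_nonneg (momentConst_nonneg hL hCs 4) (sq_nonneg _)
  simp_rw [WNval_sub_WNval_pow_four hst hB, integral_const_mul]
  calc (B ^ 2)⁻¹ * ∫ x, (∑ n ∈ J, X n x) ^ 4 ∂μ
      ≤ (B ^ 2)⁻¹ * (96 * momentConst L Cs 4 * (∑' n, √(R n)) ^ 2 * (J.card : ℝ) ^ 2) := by
        gcongr
        exact hF.integral_sum_pow_four_le hL hCs hX hb h0 hR hanti hR0 hsum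
          incrementIndices_subset_range
    _ = 96 * A * (J.card / B) ^ 2 := by ring
    _ ≤ 96 * A * ((t - s) / C₁ + m / B) ^ 2 := by
        gcongr
        exact card_incrementIndices_div_le hC₁ hm hgrowth hB hst
    _ ≤ 96 * A * (2 * (((t - s) / C₁) ^ 2 + (m / B) ^ 2)) := by
        gcongr
        exact add_sq_le
    _ ≤ 96 * A * (2 * ((1 + 1 / C₁ ^ 2) * ((t - s) ^ 2 + (m / B) ^ 2))) := by
        gcongr
        have hcross : 0 ≤ (t - s) ^ 2 + 1 / C₁ ^ 2 * (m / B) ^ 2 := by positivity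
        rw [div_pow]
        linear_combination hcross
    _ = 192 * momentConst L Cs 4 * (∑' n, √(R n)) ^ 2 * (1 + 1 / C₁ ^ 2) *
          ((t - s) ^ 2 + (m / B) ^ 2) := by ring

/-- the fourth moment bound in the proof of Proposition 2.7: under the
functional correlation bound with a nonincreasing rate `R` (with `R(0) = 1`) satisfying
`∑ √R(n) < ∞`, and the variance growth condition (iii), there is a constant `C > 0` depending
only on `L`, `C_*`, `C₁` and `∑_n √R(n)` such that for all `N ≥ N₀` and `0 ≤ s ≤ t ≤ 1`,
`μ[(W_N(t) − W_N(s))⁴] ≤ C (|t−s|² + (M_N/B_N)²)`. -/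
theorem fourth_moment_bound (L Cs C₁ S : ℝ) (hL : 0 ≤ L) (hCs : 0 ≤ Cs) (hC₁ : 0 < C₁) :
    ∃ C : ℝ, 0 < C ∧
      ∀ (M : Type) (_ : MeasurableSpace M) (μ : Measure M), IsProbabilityMeasure μ →
      ∀ X : ℕ → M → ℝ, (∀ n, Measurable (X n)) →
      (∀ n, ∀ x, |X n x| ≤ L) →
      (∀ n, ∫ x, X n x ∂μ = 0) →
      ∀ R : ℕ → ℝ, (∀ n, 0 ≤ R n) → Antitone R → R 0 = 1 →
      Summable (fun n => Real.sqrt (R n)) →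
      (∑' n : ℕ, Real.sqrt (R n)) ≤ S →
      (∀ N : ℕ, FCB μ X N L Cs R) →
      ∀ (N₀ : ℕ) (MN : ℕ → ℕ), (∀ N, 1 ≤ MN N) →
      (∀ N, N₀ ≤ N → ∀ u v : ℕ, u < v → v < N → MN N ≤ v - u →
        C₁ * MN N ≤ Bpart μ X N v - Bpart μ X N u) →
      (∀ N, N₀ ≤ N → 0 < Bvar μ X N) →
      ∀ N, N₀ ≤ N → ∀ s t : ℝ, 0 ≤ s → s ≤ t → t ≤ 1 →
        (∫ x, (WNval μ X N t x - WNval μ X N s x) ^ 4 ∂μ)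
          ≤ C * (|t - s| ^ 2 + ((MN N : ℝ) / Bvar μ X N) ^ 2) := by
  have hK := momentConst_nonneg hL hCs 4
  refine ⟨192 * momentConst L Cs 4 * S ^ 2 * (1 + 1 / C₁ ^ 2) + 1, by positivity, ?_⟩
  intro M _ μ _ X hX hb h0 R hR hanti hR0 hsum hS hF N₀ MN hMN hgrowth hB N hN s t _ hst _
  refine (fourth_moment_bound_general hL hCs hC₁ (fun n _ => hX n) (fun n _ => hb n)
    (fun n _ => h0 n) hR hanti hR0 hsum (hF N) (hMN N) (hgrowth N hN) (hB N hN) hst).trans ?_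
  rw [sq_abs]
  gcongr
  refine le_add_of_le_of_nonneg ?_ zero_le_one
  gcongr

end
end

section
/- For every γ > 1, the Pikovsky map T with parameter γ preserves the normalized Lebesgue measure λ on [−1,1]: λ(T^{−1}A) = λ(A) for every Borel set A ⊂ [−1,1]. -/
set_option autoImplicit false

open MeasureTheory Filter
open scoped ENNReal NNReal Topology

noncomputable section

/-- `T` is the Pikovsky map on `[-1,1]` with parameter `γ`: implicitly defined by
`x = (1+T(x))^γ/(2γ)` on `(0, 1/(2γ)]`, `x = T(x) + (1−T(x))^γ/(2γ)` on `[1/(2γ), 1]`, and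
the odd symmetry `T(x) = −T(−x)` on `[-1, 0)`. -/
def IsPikovsky (γ : ℝ) (T : ℝ → ℝ) : Prop :=
  (∀ x ∈ Set.Icc (-1:ℝ) 1, T x ∈ Set.Icc (-1:ℝ) 1) ∧
  (∀ x ∈ Set.Ioc (0:ℝ) (1/(2*γ)),
      T x ∈ Set.Icc (-1:ℝ) 0 ∧ x = (1 + T x) ^ γ / (2*γ)) ∧
  (∀ x ∈ Set.Icc (1/(2*γ)) 1,
      T x ∈ Set.Icc (0:ℝ) 1 ∧ x = T x + (1 - T x) ^ γ / (2*γ)) ∧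
  (∀ x ∈ Set.Ico (-1:ℝ) 0, T x = - T (-x))

/-- Lebesgue measure on `[-1,1]` normalized to a probability measure. -/
def pikMeasure : Measure ℝ := (2⁻¹ : ℝ≥0∞) • (volume.restrict (Set.Icc (-1:ℝ) 1))

instance : IsProbabilityMeasure pikMeasure := by
  constructor
  rw [pikMeasure, Measure.smul_apply, Measure.restrict_apply MeasurableSet.univ,
    Set.univ_inter, Real.volume_Icc, show ((1:ℝ) - -1 = 2) by norm_num,
    ENNReal.ofReal_ofNat, smul_eq_mul]
  exact ENNReal.inv_mul_cancel (by norm_num) (by norm_num)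

/-- The sup-norm of `f` on `[-1,1]`. -/
def supIcc (f : ℝ → ℝ) : ℝ := ⨆ x : Set.Icc (-1:ℝ) 1, |f (x:ℝ)|

/-- The Lipschitz seminorm of `f` on `[-1,1]`. -/
def lipIcc (f : ℝ → ℝ) : ℝ :=
  ⨆ p : (Set.Icc (-1:ℝ) 1) × (Set.Icc (-1:ℝ) 1),
    |f (p.1:ℝ) - f (p.2:ℝ)| / |(p.1:ℝ) - (p.2:ℝ)|

/-- `‖f‖_Lip = ‖f‖_∞ + Lip(f)` on `[-1,1]`. -/
def nLipIcc (f : ℝ → ℝ) : ℝ := supIcc f + lipIcc f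

/-!
Let `g` be the inverse of the branch of `T` over `(0, 1]`. By oddness, `T⁻¹ [-1, a]` is, up to null
sets, the union of `(0, g a]` and `[-1, -g (-a)]`, of total length `1 + (g a - g (-a))`. So an odd
map with a monotone inverse branch preserves Lebesgue measure as soon as `g a - g (-a) = a`. For
the Pikovsky map this identity is visible on the formula `g y = y⁺ + (1 - |y|) ^ γ / (2 * γ)`, and
`g` is monotone because `u ↦ u ^ γ / (2 * γ)` has slope at most `1 / 2` on `[0, 1]`.
-/

section MonotoneLeftInverse

open Set

variable {α β : Type*} [LinearOrder α] [LinearOrder β] {g : β → α} {T : α → β} {s : Set α}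
  {t : Set β} {a : β}

theorem strictMonoOn_of_leftInvOn (hg : MonotoneOn g t) (hTt : MapsTo T s t)
    (hgT : LeftInvOn g T s) : StrictMonoOn T s := fun x hx y hy hxy =>
  hg.reflect_lt (hTt hx) (hTt hy) (by rwa [hgT hx, hgT hy])

theorem preimage_Iic_ae_eq_Iic_of_leftInvOn [MeasurableSpace α] {μ : Measure α}
    [NullSingletonClass μ] (hs : MeasurableSet s) (hg : MonotoneOn g t) (hTt : MapsTo T s t)
    (hgT : LeftInvOn g T s) (ha : a ∈ t) : T ⁻¹' Iic a =ᵐ[μ.restrict s] Iic (g a) := by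
  refine eventuallyEq_set.2 ?_
  filter_upwards [ae_restrict_mem hs, Measure.ae_ne (μ.restrict s) (g a)] with x hx hne
  refine ⟨fun h => ?_, fun h => ?_⟩
  · exact (hgT hx).symm.le.trans (hg (hTt hx) ha h)
  · refine (hg.reflect_lt (hTt hx) ha ?_).le
    rw [hgT hx]
    exact lt_of_le_of_ne h hne

theorem preimage_Ici_ae_eq_Ioi_of_leftInvOn [MeasurableSpace α] {μ : Measure α}
    [NullSingletonClass μ] (hs : MeasurableSet s) (hg : MonotoneOn g t) (hTt : MapsTo T s t)
    (hgT : LeftInvOn g T s) (ha : a ∈ t) : T ⁻¹' Ici a =ᵐ[μ.restrict s] Ioi (g a) := by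
  refine eventuallyEq_set.2 ?_
  filter_upwards [ae_restrict_mem hs, Measure.ae_ne (μ.restrict s) (g a)] with x hx hne
  refine ⟨fun h => ?_, fun h => ?_⟩
  · exact lt_of_le_of_ne ((hg ha (hTt hx) h).trans (hgT hx).le) hne.symm
  · refine (hg.reflect_lt ha (hTt hx) ?_).le
    rwa [hgT hx]

theorem aemeasurable_of_leftInvOn [MeasurableSpace α] [TopologicalSpace α] [BorelSpace α]
    [OrderClosedTopology α] [MeasurableSpace β] [TopologicalSpace β] [BorelSpace β]
    [OrderTopology β] [SecondCountableTopology β] {μ : Measure α} (hs : MeasurableSet s)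
    (hg : MonotoneOn g t) (hTt : MapsTo T s t) (hgT : LeftInvOn g T s) :
    AEMeasurable T (μ.restrict s) :=
  aemeasurable_restrict_of_monotoneOn hs (strictMonoOn_of_leftInvOn hg hTt hgT).monotoneOn

end MonotoneLeftInverse

section OddPushforward

open Set

variable {μ : Measure ℝ} {c : ℝ} {T : ℝ → ℝ}

theorem restrict_Icc_neg_self [μ.IsNegInvariant] [NullSingletonClass μ] (hc : 0 ≤ c) :
    μ.restrict (Icc (-c) c) =
      μ.restrict (Ioc 0 c) + (μ.restrict (Ioc 0 c)).map Neg.neg := by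
  have hneg : (μ.restrict (Ioc 0 c)).map Neg.neg = μ.restrict (Ioc (-c) 0) := by
    have h := ((Measure.measurePreserving_neg μ).restrict_preimage
      (measurableSet_Ico (a := -c) (b := 0))).map_eq
    rwa [neg_preimage, neg_Ico, neg_neg, neg_zero, restrict_Ico_eq_restrict_Ioc] at h
  rw [hneg, ← restrict_Ioc_eq_restrict_Icc, add_comm,
    ← Ioc_union_Ioc_eq_Ioc (neg_nonpos.2 hc) hc,
    Measure.restrict_union (Ioc_disjoint_Ioc_of_le le_rfl) measurableSet_Ioc]

theorem comp_neg_ae_eq_neg_comp (hodd : ∀ x ∈ Ioc 0 c, T (-x) = -T x) :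
    T ∘ Neg.neg =ᵐ[μ.restrict (Ioc 0 c)] Neg.neg ∘ T :=
  (ae_restrict_mem measurableSet_Ioc).mono hodd

theorem aemeasurable_map_neg_of_odd (hT : AEMeasurable T (μ.restrict (Ioc 0 c)))
    (hodd : ∀ x ∈ Ioc 0 c, T (-x) = -T x) :
    AEMeasurable T ((μ.restrict (Ioc 0 c)).map Neg.neg) :=
  (MeasurableEquiv.neg ℝ).measurableEmbedding.aemeasurable_map_iff.2
    (hT.neg.congr (comp_neg_ae_eq_neg_comp hodd).symm)

theorem aemeasurable_restrict_Icc_of_odd [μ.IsNegInvariant] [NullSingletonClass μ] (hc : 0 ≤ c)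
    (hT : AEMeasurable T (μ.restrict (Ioc 0 c)))
    (hodd : ∀ x ∈ Ioc 0 c, T (-x) = -T x) :
    AEMeasurable T (μ.restrict (Icc (-c) c)) := by
  rw [restrict_Icc_neg_self hc]
  exact hT.add_measure (aemeasurable_map_neg_of_odd hT hodd)

theorem map_restrict_Icc_of_odd [μ.IsNegInvariant] [NullSingletonClass μ] (hc : 0 ≤ c)
    (hT : AEMeasurable T (μ.restrict (Ioc 0 c)))
    (hodd : ∀ x ∈ Ioc 0 c, T (-x) = -T x) :
    (μ.restrict (Icc (-c) c)).map T =
      (μ.restrict (Ioc 0 c)).map T + ((μ.restrict (Ioc 0 c)).map T).map Neg.neg := by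
  have hTneg := aemeasurable_map_neg_of_odd hT hodd
  rw [restrict_Icc_neg_self hc, AEMeasurable.map_add₀ hT hTneg,
    AEMeasurable.map_map_of_aemeasurable hTneg measurable_neg.aemeasurable,
    Measure.map_congr (comp_neg_ae_eq_neg_comp hodd),
    AEMeasurable.map_map_of_aemeasurable measurable_neg.aemeasurable hT]

end OddPushforward

theorem measure_ext_of_Iic_of_mem_Icc {α : Type*} [TopologicalSpace α] [MeasurableSpace α]
    [SecondCountableTopology α] [LinearOrder α] [OrderTopology α] [BorelSpace α] {l u : α}
    {μ ν : Measure α} [IsFiniteMeasure μ] (hlu : l ≤ u)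
    (hμ : ∀ᵐ x ∂μ, x ∈ Set.Icc l u) (hν : ∀ᵐ x ∂ν, x ∈ Set.Icc l u)
    (h : ∀ a ∈ Set.Icc l u, μ (Set.Iic a) = ν (Set.Iic a)) : μ = ν := by
  have below {ρ : Measure α} (hρ : ∀ᵐ x ∂ρ, x ∈ Set.Icc l u) {a : α} (ha : a < l) :
      ρ (Set.Iic a) = 0 :=
    measure_mono_null (t := {x | x ∉ Set.Icc l u})
      (fun _ hx hxI => (hxI.1.trans hx).not_gt ha) hρ
  have above {ρ : Measure α} (hρ : ∀ᵐ x ∂ρ, x ∈ Set.Icc l u) {a : α} (ha : u < a) :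
      ρ (Set.Iic a) = ρ (Set.Iic u) :=
    measure_congr <| eventuallyEq_set.2 <|
      hρ.mono fun _ hx => iff_of_true (hx.2.trans ha.le) hx.2
  refine Measure.ext_of_Iic μ ν fun a => ?_
  rcases lt_or_ge a l with hal | hal
  · rw [below hμ hal, below hν hal]
  rcases lt_or_ge u a with hua | hua
  · rw [above hμ hua, above hν hua, h u ⟨hlu, le_rfl⟩]
  · exact h a ⟨hal, hua⟩

section OddMap

open Set

variable {g T : ℝ → ℝ}

theorem mapsTo_Icc_of_sub_eq_one (hg : MonotoneOn g (Icc (-1) 1))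
    (hT : MapsTo T (Ioc 0 1) (Icc (-1) 1)) (hgT : LeftInvOn g T (Ioc 0 1))
    (hsub : g 1 - g (-1) = 1) : MapsTo g (Icc (-1) 1) (Icc 0 1) := by
  have hone : (1 : ℝ) ∈ Icc (-1) 1 := by simp
  have hneg_one : (-1 : ℝ) ∈ Icc (-1) 1 := by simp
  have one_le : 1 ≤ g 1 := by
    have h1 : (1 : ℝ) ∈ Ioc 0 1 := by simp
    exact (hgT h1).symm.le.trans (hg (hT h1) hone (hT h1).2)
  have neg_one_le : g (-1) ≤ 0 := by
    refine le_of_forall_gt_imp_ge_of_dense fun x hx => ?_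
    have hmem : min x 1 ∈ Ioc (0 : ℝ) 1 := ⟨lt_min hx one_pos, min_le_right x 1⟩
    calc g (-1) ≤ g (T (min x 1)) := hg hneg_one (hT hmem) (hT hmem).1
      _ = min x 1 := hgT hmem
      _ ≤ x := min_le_left x 1
  intro y hy
  have hlow := hg hneg_one hy hy.1
  have hhigh := hg hy hone hy.2
  exact ⟨by linarith, by linarith⟩

theorem map_volume_restrict_Ioc_Iic {t : Set ℝ} {a : ℝ} (hg : MonotoneOn g t)
    (hT : MapsTo T (Ioc 0 1) t) (hgT : LeftInvOn g T (Ioc 0 1)) (ha : a ∈ t) (hga : g a ≤ 1) :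
    (volume.restrict (Ioc 0 1)).map T (Iic a) = ENNReal.ofReal (g a) := by
  rw [Measure.map_apply_of_aemeasurable (aemeasurable_of_leftInvOn measurableSet_Ioc hg hT hgT)
      measurableSet_Iic,
    measure_congr (preimage_Iic_ae_eq_Iic_of_leftInvOn measurableSet_Ioc hg hT hgT ha),
    Measure.restrict_apply measurableSet_Iic, Iic_inter_Ioc_of_le hga, Real.volume_Ioc,
    sub_zero]

theorem map_volume_restrict_Ioc_Ici {t : Set ℝ} {a : ℝ} (hg : MonotoneOn g t)
    (hT : MapsTo T (Ioc 0 1) t) (hgT : LeftInvOn g T (Ioc 0 1)) (ha : a ∈ t) (hga : 0 ≤ g a) :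
    (volume.restrict (Ioc 0 1)).map T (Ici a) = ENNReal.ofReal (1 - g a) := by
  rw [Measure.map_apply_of_aemeasurable (aemeasurable_of_leftInvOn measurableSet_Ioc hg hT hgT)
      measurableSet_Ici,
    measure_congr (preimage_Ici_ae_eq_Ioi_of_leftInvOn measurableSet_Ioc hg hT hgT ha),
    Measure.restrict_apply measurableSet_Ioi, inter_comm, Ioc_inter_Ioi, max_eq_right hga,
    Real.volume_Ioc]

theorem map_volume_restrict_Icc_eq_self (hg : MonotoneOn g (Icc (-1) 1))
    (hT : MapsTo T (Ioc 0 1) (Icc (-1) 1)) (hgT : LeftInvOn g T (Ioc 0 1))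
    (hodd : ∀ x ∈ Ioc 0 1, T (-x) = -T x) (hsub : ∀ y ∈ Icc (-1) 1, g y - g (-y) = y) :
    (volume.restrict (Icc (-1) 1)).map T = volume.restrict (Icc (-1) 1) := by
  have hTm := aemeasurable_of_leftInvOn (μ := volume) measurableSet_Ioc hg hT hgT
  have hmem : ∀ᵐ y ∂(volume.restrict (Ioc 0 1)).map T, y ∈ Icc (-1) 1 :=
    (ae_map_iff hTm measurableSet_Icc).2 ((ae_restrict_mem measurableSet_Ioc).mono hT)
  have hmem_neg : ∀ᵐ y ∂((volume.restrict (Ioc 0 1)).map T).map Neg.neg, y ∈ Icc (-1) 1 :=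
    (ae_map_iff measurable_neg.aemeasurable measurableSet_Icc).2
      (hmem.mono fun y hy => ⟨neg_le_neg hy.2, neg_le.1 hy.1⟩)
  rw [map_restrict_Icc_of_odd zero_le_one hTm hodd]
  refine measure_ext_of_Iic_of_mem_Icc (by norm_num) (ae_add_measure_iff.2 ⟨hmem, hmem_neg⟩)
    (ae_restrict_mem measurableSet_Icc) fun a ha => ?_
  have hna : -a ∈ Icc (-1 : ℝ) 1 := ⟨neg_le_neg ha.2, neg_le.1 ha.1⟩
  have hgI := mapsTo_Icc_of_sub_eq_one hg hT hgT (hsub 1 (by simp))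
  calc ((volume.restrict (Ioc 0 1)).map T + ((volume.restrict (Ioc 0 1)).map T).map Neg.neg)
        (Iic a)
      = (volume.restrict (Ioc 0 1)).map T (Iic a)
        + (volume.restrict (Ioc 0 1)).map T (Ici (-a)) := by
        rw [Measure.add_apply, Measure.map_apply measurable_neg measurableSet_Iic, neg_preimage,
          neg_Iic]
    _ = ENNReal.ofReal (g a) + ENNReal.ofReal (1 - g (-a)) := by
        rw [map_volume_restrict_Ioc_Iic hg hT hgT ha (hgI ha).2,
          map_volume_restrict_Ioc_Ici hg hT hgT hna (hgI hna).1]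
    _ = ENNReal.ofReal (a - -1) := by
        rw [← ENNReal.ofReal_add (hgI ha).1 (sub_nonneg.2 (hgI hna).2)]
        congr 1
        linarith [hsub a ha]
    _ = volume.restrict (Icc (-1) 1) (Iic a) := by
        rw [← restrict_Ioc_eq_restrict_Icc, Measure.restrict_apply measurableSet_Iic,
          Iic_inter_Ioc_of_le ha.2, Real.volume_Ioc]

theorem pikovsky_measure_preserving_general (hg : MonotoneOn g (Icc (-1) 1))
    (hT : MapsTo T (Ioc 0 1) (Icc (-1) 1)) (hgT : LeftInvOn g T (Ioc 0 1))
    (hodd : ∀ x ∈ Ioc 0 1, T (-x) = -T x) (hsub : ∀ y ∈ Icc (-1) 1, g y - g (-y) = y)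
    {A : Set ℝ} (hA : MeasurableSet A) : pikMeasure (T ⁻¹' A) = pikMeasure A := by
  have hTm : AEMeasurable T (volume.restrict (Icc (-1) 1)) :=
    aemeasurable_restrict_Icc_of_odd zero_le_one
      (aemeasurable_of_leftInvOn measurableSet_Ioc hg hT hgT) hodd
  rw [pikMeasure, Measure.smul_apply, Measure.smul_apply,
    ← Measure.map_apply_of_aemeasurable hTm hA,
    map_volume_restrict_Icc_eq_self hg hT hgT hodd hsub]

end OddMap

section PikovskyInverse

open Set

variable {γ : ℝ}

/-- The inverse of the right branch `T : (0, 1] → (-1, 1]` of the Pikovsky map. The positive part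
merges the two defining formulas, for `y ≤ 0` and for `0 ≤ y`, into one. -/
def pikovskyInverse (γ y : ℝ) : ℝ := y⁺ + (1 - |y|) ^ γ / (2 * γ)

theorem pikovskyInverse_of_nonpos {y : ℝ} (hy : y ≤ 0) :
    pikovskyInverse γ y = (1 + y) ^ γ / (2 * γ) := by
  rw [pikovskyInverse, posPart_eq_zero.2 hy, abs_of_nonpos hy, sub_neg_eq_add, zero_add]

theorem pikovskyInverse_of_nonneg {y : ℝ} (hy : 0 ≤ y) :
    pikovskyInverse γ y = y + (1 - y) ^ γ / (2 * γ) := by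
  rw [pikovskyInverse, posPart_eq_self.2 hy, abs_of_nonneg hy]

theorem pikovskyInverse_sub_neg (γ y : ℝ) : pikovskyInverse γ y - pikovskyInverse γ (-y) = y := by
  rw [pikovskyInverse, pikovskyInverse, abs_neg, posPart_neg, add_sub_add_right_eq_sub,
    posPart_sub_negPart]

theorem rpow_sub_rpow_le_mul_sub {u v : ℝ} (hγ : 1 ≤ γ) (hv : 0 ≤ v) (hvu : v ≤ u) (hu : u ≤ 1) :
    u ^ γ - v ^ γ ≤ γ * (u - v) := by
  have hdiff : Differentiable ℝ fun x : ℝ => x ^ γ := Real.differentiable_rpow_const hγ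
  refine (convex_Icc 0 1).image_sub_le_mul_sub_of_deriv_le hdiff.continuous.continuousOn
    hdiff.differentiableOn (fun x hx => ?_) v ⟨hv, hvu.trans hu⟩ u ⟨hv.trans hvu, hu⟩ hvu
  obtain ⟨hx0, hx1⟩ := interior_subset hx
  rw [Real.deriv_rpow_const]
  exact mul_le_of_le_one_right (by linarith) (Real.rpow_le_one hx0 hx1 (by linarith))

theorem monotoneOn_pikovskyInverse (hγ : 1 ≤ γ) :
    MonotoneOn (pikovskyInverse γ) (Icc (-1) 1) := by
  have hγ0 : 0 < 2 * γ := by linarith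
  have hleft : MonotoneOn (pikovskyInverse γ) (Icc (-1) 0) := by
    intro a ha b hb hab
    rw [pikovskyInverse_of_nonpos ha.2, pikovskyInverse_of_nonpos hb.2]
    have : 0 ≤ 1 + a := by linarith [ha.1]
    gcongr
  have hright : MonotoneOn (pikovskyInverse γ) (Icc 0 1) := by
    intro a ha b hb hab
    rw [pikovskyInverse_of_nonneg ha.1, pikovskyInverse_of_nonneg hb.1]
    have hslope : (1 - a) ^ γ - (1 - b) ^ γ ≤ γ * (1 - a - (1 - b)) :=
      rpow_sub_rpow_le_mul_sub hγ (by linarith [hb.2]) (by linarith) (by linarith [ha.1])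
    have : (1 - a) ^ γ / (2 * γ) - (1 - b) ^ γ / (2 * γ) ≤ (b - a) / 2 := by
      rw [← sub_div, div_le_iff₀ hγ0]
      linarith
    linarith
  rw [← Icc_union_Icc_eq_Icc (by norm_num : (-1 : ℝ) ≤ 0) zero_le_one]
  exact hleft.union_right hright (isGreatest_Icc (by norm_num)) (isLeast_Icc zero_le_one)

end PikovskyInverse

namespace IsPikovsky

open Set

variable {γ : ℝ} {T : ℝ → ℝ}

theorem mapsTo_Ioc (hT : IsPikovsky γ T) : MapsTo T (Ioc 0 1) (Icc (-1) 1) := fun x hx =>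
  hT.1 x ⟨by linarith [hx.1], hx.2⟩

theorem leftInvOn (hT : IsPikovsky γ T) : LeftInvOn (pikovskyInverse γ) T (Ioc 0 1) := by
  obtain ⟨-, hleft, hright, -⟩ := hT
  intro x hx
  rcases le_total x (1 / (2 * γ)) with h | h
  · obtain ⟨hTx, hx_eq⟩ := hleft x ⟨hx.1, h⟩
    rw [pikovskyInverse_of_nonpos hTx.2, ← hx_eq]
  · obtain ⟨hTx, hx_eq⟩ := hright x ⟨h, hx.2⟩
    rw [pikovskyInverse_of_nonneg hTx.1, ← hx_eq]

theorem map_neg (hT : IsPikovsky γ T) : ∀ x ∈ Ioc 0 1, T (-x) = -T x := fun x hx => by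
  rw [hT.2.2.2 (-x) ⟨neg_le_neg hx.2, neg_neg_of_pos hx.1⟩, neg_neg]

end IsPikovsky

/-- for every `γ > 1`, the Pikovsky map with parameter `γ` preserves the
normalized Lebesgue measure `λ` on `[-1,1]`: `λ(T⁻¹A) = λ(A)` for every Borel set `A`. -/
theorem pikovsky_measure_preserving (γ : ℝ) (hγ : 1 < γ) (T : ℝ → ℝ)
    (hT : IsPikovsky γ T) :
    ∀ A : Set ℝ, MeasurableSet A → pikMeasure (T ⁻¹' A) = pikMeasure A :=
  fun _ hA => pikovsky_measure_preserving_general (monotoneOn_pikovskyInverse hγ.le)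
    hT.mapsTo_Ioc hT.leftInvOn hT.map_neg (fun y _ => pikovskyInverse_sub_neg γ y) hA

end
end
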